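/- Let A be a finite-dimensional commutative unital ℂ-algebra with a conjugate-linear involution J : A → A satisfying J(x * y) = J(x) * J(y), and a ℂ-linear functional ε : A → ℂ satisfying ε(J(x)) = conj(ε(x)) for all x, such that the form h(x, y) = ε(x * J(y)) is positive definite. Then there exists a norm ‖·‖ on A such that ‖x * y‖ ≤ ‖x‖ · ‖y‖ for all x, y ∈ A and ‖J(x) * x‖ = ‖x‖ · ‖J(x)‖ for all x ∈ A; that is, A admits a canonical C*-Frobenius algebra structure. -/

import Mathlib

/-- Let `A` be a finite-dimensional commutative unital ℂ-algebra with
a conjugate-linear involution `J` satisfying `J (x * y) = J x * J y` and a ℂ-linear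
functional `ε` with `ε (J x) = conj (ε x)`, such that `h x y = ε (x * J y)` is
positive definite.  Then there is a norm `N` on `A` that is submultiplicative
(`N (x * y) ≤ N x * N y`) and satisfies the C*-identity
`N (J x * x) = N x * N (J x)`; i.e. `A` admits a canonical C*-Frobenius algebra
structure. -/
theorem stmt15 {A : Type*} [CommRing A] [Algebra ℂ A] [FiniteDimensional ℂ A]
    (J : A →ₛₗ[starRingEnd ℂ] A) (hJinv : ∀ x : A, J (J x) = x)
    (hJmul : ∀ x y : A, J (x * y) = J x * J y)
    (ε : A →ₗ[ℂ] ℂ) (hJε : ∀ x : A, ε (J x) = starRingEnd ℂ (ε x))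
    (hpos : ∀ x : A, x ≠ 0 → (ε (x * J x)).im = 0 ∧ 0 < (ε (x * J x)).re) :
    ∃ N : A → ℝ,
      -- N is a norm on the complex vector space A
      (∀ x : A, N x = 0 ↔ x = 0) ∧
      (∀ x y : A, N (x + y) ≤ N x + N y) ∧
      (∀ (c : ℂ) (x : A), N (c • x) = ‖c‖ * N x) ∧
      -- N is submultiplicative
      (∀ x y : A, N (x * y) ≤ N x * N y) ∧
      -- the C*-identity
      (∀ x : A, N (J x * x) = N x * N (J x)) := by
  let core : InnerProductSpace.Core ℂ A :=
    { inner := fun x y => ε (y * J x)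
      conj_inner_symm := by
        intro x y
        change starRingEnd ℂ (ε (x * J y)) = ε (y * J x)
        rw [← hJε, hJmul, hJinv, mul_comm]
      re_inner_nonneg := by
        intro x
        change 0 ≤ (ε (x * J x)).re
        by_cases hx : x = 0
        · simp [hx]
        · exact (hpos x hx).2.le
      add_left := by
        intro x y z
        change ε (z * J (x + y)) = ε (z * J x) + ε (z * J y)
        rw [map_add, mul_add, map_add]
      smul_left := by
        intro x y r
        change ε (y * J (r • x)) = starRingEnd ℂ r * ε (y * J x)
        rw [LinearMap.map_smulₛₗ, mul_smul_comm, map_smul, smul_eq_mul]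
      definite := by
        intro x hx
        change ε (x * J x) = 0 at hx
        by_contra h
        have := (hpos x h).2
        rw [hx] at this
        simp at this }
  letI ng : NormedAddCommGroup A := core.toNormedAddCommGroup
  letI ips : InnerProductSpace ℂ A := InnerProductSpace.ofCore core.toCore
  haveI : CompleteSpace A := FiniteDimensional.complete ℂ A
  have hinner : ∀ x y : A, inner ℂ x y = ε (y * J x) := fun x y => rfl
  let L : A → (A →L[ℂ] A) := fun x => LinearMap.toContinuousLinearMap (LinearMap.mulLeft ℂ x)
  have hL : ∀ x y : A, L x y = x * y := fun x y => rfl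
  have hLmul : ∀ x y : A, L (x * y) = (L x).comp (L y) := by
    intro x y
    ext z
    simp only [ContinuousLinearMap.comp_apply, hL, mul_assoc]
  have hadj : ∀ x : A, L (J x) = ContinuousLinearMap.adjoint (L x) := by
    intro x
    rw [ContinuousLinearMap.eq_adjoint_iff]
    intro y z
    rw [hinner, hinner, hL, hL, hJmul, hJinv]
    congr 1
    ring
  refine ⟨fun x => ‖L x‖, ?_, ?_, ?_, ?_, ?_⟩
  · intro x
    rw [norm_eq_zero]
    constructor
    · intro h
      have h1 : L x 1 = 0 := by rw [h]; rfl
      rwa [hL, mul_one] at h1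
    · rintro rfl
      ext z
      rw [hL, zero_mul]
      rfl
  · intro x y
    have : L (x + y) = L x + L y := by
      ext z
      rw [ContinuousLinearMap.add_apply, hL, hL, hL, add_mul]
    simp only [this]
    exact norm_add_le _ _
  · intro c x
    have : L (c • x) = c • L x := by
      ext z
      rw [ContinuousLinearMap.smul_apply, hL, hL, smul_mul_assoc]
    simp only [this]
    exact norm_smul _ _
  · intro x y
    simp only [hLmul]
    exact ContinuousLinearMap.opNorm_comp_le _ _
  · intro x
    simp only [hLmul, hadj]
    rw [ContinuousLinearMap.norm_adjoint_comp_self, LinearIsometryEquiv.norm_map]
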